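/- Let A, X, B be FDDS, let α be the number of unroll trees of 𝒰(B) (i.e., the number of periodic states of B), and let n ≥ 2α + depth(B). Then 𝒰(A)·𝒰(X) = 𝒰(B) if and only if 𝒰(A)|_n · 𝒰(X)|_n = 𝒰(B)|_n. -/

import Mathlib

noncomputable section

/-- A rooted tree (finite or infinite), presented by its levels: `level n` is the
set of vertices of depth `n` (finitely many at each depth), every vertex of depth
`n+1` has a parent of depth `n` (edges are directed towards the root), and there
is a unique vertex of depth `0`, the root. -/
structure RTree : Type 1 where
  level : ℕ → Type
  parent : ∀ n, level (n + 1) → level n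
  fin : ∀ n, Fintype (level n)
  root : level 0
  root_unique : ∀ x : level 0, x = root

namespace RTree

/-- Isomorphism of rooted trees: a depth-preserving bijection of the vertices
commuting with the parent maps (hence root- and edge-preserving). -/
def Iso (t s : RTree) : Prop :=
  ∃ e : ∀ n, t.level n ≃ s.level n,
    ∀ (n : ℕ) (x : t.level (n + 1)), e n (t.parent n x) = s.parent n (e (n + 1) x)

/-- The (layer-by-layer direct) product of two rooted trees. -/
def tprod (t s : RTree) : RTree where
  level n := t.level n × s.level n
  parent n x := (t.parent n x.1, s.parent n x.2)
  fin n := by haveI := t.fin n; haveI := s.fin n; infer_instance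
  root := (t.root, s.root)
  root_unique x := by
    obtain ⟨a, b⟩ := x
    rw [t.root_unique a, s.root_unique b]

/-- The cut of a tree at depth `n`: the subtree induced on vertices of depth `≤ n`. -/
def tcut (t : RTree) (n : ℕ) : RTree where
  level k := PLift (k ≤ n) × t.level k
  parent k x := (⟨Nat.le_of_succ_le x.1.down⟩, t.parent k x.2)
  fin k := by
    haveI := t.fin k
    haveI : Finite (PLift (k ≤ n)) := Finite.of_subsingleton
    exact Fintype.ofFinite _
  root := (⟨Nat.zero_le n⟩, t.root)
  root_unique x := by
    obtain ⟨a, b⟩ := x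
    rw [t.root_unique b]

/-- A tree is finite when it has no vertices below some depth. -/
def IsFinite (t : RTree) : Prop := ∃ N, ∀ k, N ≤ k → IsEmpty (t.level k)

/-- The depth of a (finite) tree: the largest depth of one of its vertices. -/
def depth (t : RTree) : ℕ := sSup {n | Nonempty (t.level n)}

/-- `tpow t k` is the `k`-fold product `t^k` of the tree `t` with itself (for `k ≥ 1`). -/
def tpow (t : RTree) : ℕ → RTree
  | 0 => t
  | 1 => t
  | n + 2 => tprod t (tpow t (n + 1))

/-- Iterated parent map, sending a vertex of depth `k+1` to its ancestor of depth 1. -/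
def down (t : RTree) : ∀ k, t.level (k + 1) → t.level 1
  | 0, x => x
  | k + 1, x => t.down k (t.parent (k + 1) x)

/-- The subtree of `t` rooted at the depth-1 vertex `v` (a child of the root). -/
def subtreeAt (t : RTree) (v : t.level 1) : RTree where
  level k := { x : t.level (k + 1) // t.down k x = v }
  parent k x := ⟨t.parent (k + 1) x.1, x.2⟩
  fin k := by haveI := t.fin (k + 1); exact Fintype.ofFinite _
  root := ⟨v, rfl⟩
  root_unique x := Subtype.ext x.2

/-- `D t`: the forest (here, a list) of the subtrees of `t` rooted at the
children of the root. -/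
def D (t : RTree) : List RTree := (@Finset.univ _ (t.fin 1)).toList.map t.subtreeAt

end RTree

/-- A forest is a finite multiset of rooted trees; we represent it by a list of
(concrete) trees, equality of forests being `ForestEq` below. -/
abbrev Forest := List RTree

/-- Equality of forests as multisets of isomorphism classes of rooted trees. -/
def ForestEq (F G : Forest) : Prop := Multiset.Rel RTree.Iso (↑F) (↑G)

/-- `F` is a sub-multiset of `G` up to isomorphism of rooted trees. -/
def ForestLe (F G : Forest) : Prop :=
  ∃ H : Multiset RTree, H ≤ (↑G : Multiset RTree) ∧ Multiset.Rel RTree.Iso (↑F) H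

/-- The product of two forests: the multiset of pairwise products. -/
def fprod (F G : Forest) : Forest := (F.map fun t => G.map fun s => t.tprod s).flatten

/-- The cut of a forest at depth `n`. -/
def fcut (F : Forest) (n : ℕ) : Forest := F.map (RTree.tcut · n)

/-- The depth of a forest: maximum of the depths of its trees. -/
def fdepth (F : Forest) : ℕ := (F.map RTree.depth).foldr max 0

/-- `fpow F k` is the `k`-fold product `F^k` of the forest `F` with itself (for `k ≥ 1`). -/
def fpow (F : Forest) : ℕ → Forest
  | 0 => F
  | 1 => F
  | n + 2 => fprod F (fpow F (n + 1))

/-- `D` of a forest: the multiset union of the `D` of its trees. -/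
def fD (F : Forest) : Forest := (F.map RTree.D).flatten

/-- `R F`: the rooted tree obtained by attaching each tree of the forest `F`
as a child subtree of a new common root, so that `D (R F) = F`. -/
def rollRoot (F : Forest) : RTree where
  level k :=
    match k with
    | 0 => PUnit
    | k + 1 => Σ i : Fin F.length, (F.get i).level k
  parent k :=
    match k with
    | 0 => fun _ => PUnit.unit
    | k + 1 => fun x => ⟨x.1, (F.get x.1).parent k x.2⟩
  fin k := by
    match k with
    | 0 => exact inferInstanceAs (Fintype PUnit)
    | k + 1 =>
      haveI : ∀ i : Fin F.length, Fintype ((F.get i).level k) := fun i => (F.get i).fin k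
      exact inferInstanceAs (Fintype (Σ i : Fin F.length, (F.get i).level k))
  root := PUnit.unit
  root_unique _ := rfl

/-- The number of vertices of depth `d` in a forest. -/
def levelCard (F : Forest) (d : ℕ) : ℕ := (F.map fun t => @Fintype.card _ (t.fin d)).sum

/-- The total number of vertices of a (finite) forest. -/
def totalCard (F : Forest) : ℕ := ∑ d ∈ Finset.range (fdepth F + 1), levelCard F d

/-- A finite discrete-time dynamical system: a finite set of states together
with a transition function. -/
structure FDDS : Type 1 where
  S : Type
  fin : Fintype S
  f : S → S

namespace FDDS

/-- A state is periodic when some positive iterate of the transition function fixes it. -/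
def Periodic (A : FDDS) (u : A.S) : Prop := ∃ p, 1 ≤ p ∧ A.f^[p] u = u

/-- The least `k` such that `f^[k] s` is periodic. -/
def depthOf (A : FDDS) (s : A.S) : ℕ := sInf {k | A.Periodic (A.f^[k] s)}

/-- The depth of an FDDS: the maximum over states `s` of the least `k` such
that `f^[k] s` is periodic. -/
def depth (A : FDDS) : ℕ := sSup {d | ∃ s : A.S, d = A.depthOf s}

/-- The functional digraph of `A` has a single (weakly) connected component. -/
def Connected (A : FDDS) : Prop := ∀ s s' : A.S, ∃ k l, A.f^[k] s = A.f^[l] s'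

/-- The unroll tree of `A` in the state `u`: vertices of depth `k` are the
`k`-th preimages of `u`, the parent of `(v,k+1)` being `(f v, k)`. -/
def unrollTree (A : FDDS) (u : A.S) : RTree where
  level k := { s : A.S // A.f^[k] s = u }
  parent k x := ⟨A.f x.1, by rw [← Function.iterate_succ_apply]; exact x.2⟩
  fin k := by haveI := A.fin; exact Fintype.ofFinite _
  root := ⟨u, rfl⟩
  root_unique x := Subtype.ext x.2

/-- The unroll of `A`: the multiset of the unroll trees of `A` in its periodic states. -/
def unroll (A : FDDS) : Forest :=
  haveI := A.fin
  letI : DecidablePred A.Periodic := Classical.decPred _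
  (Finset.univ.filter A.Periodic).toList.map A.unrollTree

/-- The minimal period of a periodic state. -/
def minPeriod (A : FDDS) (u : A.S) : ℕ := sInf {p | 1 ≤ p ∧ A.f^[p] u = u}

/-- The periodic state `w` with `f^[i] w = u`: the `i`-th "shift" of `u`
backwards along its cycle. -/
def shiftState (A : FDDS) (u : A.S) (i : ℕ) : A.S := A.f^[i * (A.minPeriod u - 1)] u

/-- The shift `σ^i(t)` of the unroll tree `t = unrollTree A u`: the unroll tree
rooted at the depth-`i` vertex of the infinite branch of `t`. -/
def shiftTree (A : FDDS) (u : A.S) (i : ℕ) : RTree := A.unrollTree (A.shiftState u i)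

/-- The unroll tree of `A` in `u` admits a periodic pattern of size `p ≥ 1`,
i.e. `σ^p(t_u) = t_u`. -/
def PatternSize (A : FDDS) (u : A.S) (p : ℕ) : Prop :=
  1 ≤ p ∧ RTree.Iso (A.shiftTree u p) (A.unrollTree u)

/-- `|Shift(t_u)|`: the smallest size of a periodic pattern of the unroll tree of `A` in `u`. -/
def shiftCount (A : FDDS) (u : A.S) : ℕ := sInf {p | A.PatternSize u p}

end FDDS

/-- A rooted tree is an unroll tree when it is isomorphic to the unroll tree of
some FDDS in one of its periodic states. -/
def IsUnrollTree (x : RTree) : Prop :=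
  ∃ (A : FDDS) (u : A.S), A.Periodic u ∧ RTree.Iso x (A.unrollTree u)

end

/-!
The cut at depth `k` of an unroll tree is determined by its code: the multiset of the codes, at
depth `k - 1`, of the subtrees at the children of the root. If every state with a `d`-th preimage
is periodic, then a code of depth at least `d` tells the periodic preimage of a periodic state apart
from the others, and determines the whole subtree at each of the latter. Hence a code of depth `n`
at a periodic state determines the finite trees hooked at the first `n - d` vertices of the infinite
branch. Along that branch everything repeats with the period of the state, and two sequences of
periods `p` and `q` which agree on their first `p + q` terms are equal. For a system of depth `d`
with `α` periodic states all periods are at most `α`, so codes of depth `2α + d` determine its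
unroll trees. A product of unrolls is again an unroll, since `𝒰(A)·𝒰(X) = 𝒰(A × X)`.
-/

open Function Set

theorem eq_of_periodic_of_forall_lt_add {γ : Type*} {x y : ℕ → γ} {p q : ℕ}
    (hx : Function.Periodic x p) (hy : Function.Periodic y q) (hp : 0 < p) (hq : 0 < q)
    (h : ∀ i < p + q, x i = y i) (i : ℕ) : x i = y i := by
  induction i using Nat.strong_induction_on with
  | _ i ih =>
    rcases lt_or_ge i (p + q) with hi | hi
    · exact h i hi
    obtain ⟨r, rfl⟩ := Nat.exists_eq_add_of_le' hi
    calc x (r + (p + q)) = x (r + q) := by rw [add_comm p, ← add_assoc, hx]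
      _ = y (r + q) := ih _ (by lia)
      _ = y r := hy r
      _ = x r := (ih r (by lia)).symm
      _ = x (r + p) := (hx r).symm
      _ = y (r + p) := ih _ (by lia)
      _ = y (r + (p + q)) := by rw [← add_assoc, hy]

/-- Isomorphism classes of rooted trees of depth at most `k`. The class of a tree is encoded by the
number of children of its root whose subtrees belong to each class of depth at most `k - 1`. -/
def TreeCode : ℕ → Type
  | 0 => Unit
  | k + 1 => TreeCode k → ℕ

namespace TreeCode

variable {ι κ : Type*} {k : ℕ}

/-- The code of a rooted tree, given the family of the codes of the subtrees at the children of
its root. -/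
noncomputable def node (a : ι → TreeCode k) : TreeCode (k + 1) :=
  fun c => Nat.card {i // a i = c}

theorem node_eq_node_iff [Finite ι] [Finite κ] {a : ι → TreeCode k} {b : κ → TreeCode k} :
    node a = node b ↔ ∃ e : ι ≃ κ, ∀ i, a i = b (e i) := by
  constructor
  · intro h
    have fiberEquiv (c : TreeCode k) : Nonempty ({i // a i = c} ≃ {j // b j = c}) :=
      Finite.card_eq.1 (congrFun h c)
    exact ⟨Equiv.ofFiberEquiv fun c => (fiberEquiv c).some,
      fun i => (Equiv.ofFiberEquiv_map _ i).symm⟩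
  · rintro ⟨e, he⟩
    exact funext fun c => Nat.card_congr (e.subtypeEquiv fun i => by rw [he])

end TreeCode

namespace RTree

variable {t s r : RTree}

instance (t : RTree) (n : ℕ) : Finite (t.level n) := @Finite.of_fintype _ (t.fin n)

theorem Iso.symm (h : t.Iso s) : s.Iso t := by
  obtain ⟨e, he⟩ := h
  exact ⟨fun n => (e n).symm, fun n x => by
    rw [Equiv.symm_apply_eq, he, Equiv.apply_symm_apply]⟩

theorem Iso.trans (h : t.Iso s) (h' : s.Iso r) : t.Iso r := by
  obtain ⟨e, he⟩ := h
  obtain ⟨e', he'⟩ := h'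
  exact ⟨fun n => (e n).trans (e' n), fun n x => by simp only [Equiv.trans_apply, he, he']⟩

instance : IsTrans RTree Iso := ⟨fun _ _ _ => Iso.trans⟩

theorem Iso.tcut (h : t.Iso s) (n : ℕ) : (t.tcut n).Iso (s.tcut n) := by
  obtain ⟨e, he⟩ := h
  exact ⟨fun k => Equiv.prodCongr (Equiv.refl _) (e k), fun k x => Prod.ext rfl (he k x.2)⟩

theorem tprod_tcut_iso (t s : RTree) (n : ℕ) :
    ((t.tcut n).tprod (s.tcut n)).Iso ((t.tprod s).tcut n) :=
  ⟨fun _ =>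
    { toFun := fun x => (x.1.1, (x.1.2, x.2.2))
      invFun := fun y => ((y.1, y.2.1), (y.1, y.2.2))
      left_inv := fun ⟨⟨⟨_⟩, _⟩, ⟨⟨_⟩, _⟩⟩ => rfl
      right_inv := fun _ => rfl }, fun _ _ => rfl⟩

theorem iso_of_bisimulation (R : ∀ n, t.level n → s.level n → Prop) (hroot : R 0 t.root s.root)
    (hlift : ∀ n v w, R n v w → ∃ e : {x // t.parent n x = v} ≃ {y // s.parent n y = w},
      ∀ x, R (n + 1) x.1 (e x).1) : t.Iso s := by
  choose e he using hlift
  let LevelEquiv (n : ℕ) : Type := {E : t.level n ≃ s.level n // ∀ v, R n v (E v)}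
  let rootEquiv : LevelEquiv 0 :=
    ⟨{ toFun := fun _ => s.root
       invFun := fun _ => t.root
       left_inv := fun v => (t.root_unique v).symm
       right_inv := fun w => (s.root_unique w).symm },
      fun v => by rw [t.root_unique v]; exact hroot⟩
  let fiberwise (n : ℕ) (E : LevelEquiv n) : t.level (n + 1) ≃ s.level (n + 1) :=
    (Equiv.sigmaFiberEquiv (t.parent n)).symm.trans
      ((Equiv.sigmaCongr E.1 fun v => e n v (E.1 v) (E.2 v)).trans
        (Equiv.sigmaFiberEquiv (s.parent n)))
  let extend (n : ℕ) (E : LevelEquiv n) : LevelEquiv (n + 1) :=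
    ⟨fiberwise n E, fun x => he n _ _ (E.2 (t.parent n x)) ⟨x, rfl⟩⟩
  let levelEquiv (n : ℕ) : LevelEquiv n := Nat.rec rootEquiv extend n
  exact ⟨fun n => (levelEquiv n).1,
    fun n x => (e n _ _ ((levelEquiv n).2 (t.parent n x)) ⟨x, rfl⟩).2.symm⟩

/-- The code of the subtree of `t` at a vertex, cut at depth `k` below that vertex. -/
noncomputable def code (t : RTree) : ∀ (k : ℕ) {n : ℕ}, t.level n → TreeCode k
  | 0, _, _ => ()
  | k + 1, n, v => TreeCode.node fun x : {x // t.parent n x = v} => t.code k x.1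

theorem code_eq_of_le {j k : ℕ} (hjk : j ≤ k) {m n : ℕ} {v : t.level m} {w : s.level n}
    (h : t.code k v = s.code k w) : t.code j v = s.code j w := by
  induction j generalizing k m n with
  | zero => rfl
  | succ j ih =>
    obtain ⟨k, rfl⟩ := Nat.exists_eq_add_of_le' (Nat.one_le_of_lt hjk)
    obtain ⟨e, he⟩ := TreeCode.node_eq_node_iff.1 h
    exact TreeCode.node_eq_node_iff.2 ⟨e, fun x => ih (Nat.le_of_succ_le_succ hjk) (he x)⟩

theorem code_root_eq_of_iso (h : t.Iso s) (k : ℕ) : t.code k t.root = s.code k s.root := by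
  obtain ⟨e, he⟩ := h
  have code_apply (k : ℕ) : ∀ {n} (v : t.level n), t.code k v = s.code k (e n v) := by
    induction k with
    | zero => exact fun _ => rfl
    | succ k ih =>
      intro n v
      exact TreeCode.node_eq_node_iff.2 ⟨(e (n + 1)).subtypeEquiv fun x => by
        rw [← he, (e n).apply_eq_iff_eq], fun x => ih x.1⟩
  rw [code_apply k t.root, s.root_unique (e 0 t.root)]

theorem code_tcut {k l n : ℕ} (h : k + l ≤ n) (hl : PLift (l ≤ n)) (v : t.level l) :
    (t.tcut n).code k (n := l) (hl, v) = t.code k v := by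
  induction k generalizing l with
  | zero => rfl
  | succ k ih =>
    have hl' : l + 1 ≤ n := by lia
    let e : {x // (t.tcut n).parent l x = (hl, v)} ≃ {x // t.parent l x = v} :=
      { toFun := fun x => ⟨x.1.2, congrArg Prod.snd x.2⟩
        invFun := fun x => ⟨(⟨hl'⟩, x.1), Prod.ext rfl x.2⟩
        left_inv := fun _ => rfl
        right_inv := fun _ => rfl }
    exact TreeCode.node_eq_node_iff.2 ⟨e, fun x => ih (by lia) x.1.1 x.1.2⟩

theorem code_root_eq_of_tcut_iso {n : ℕ} (h : (t.tcut n).Iso (s.tcut n)) :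
    t.code n t.root = s.code n s.root := by
  calc t.code n t.root = (t.tcut n).code n (t.tcut n).root := (code_tcut le_rfl _ t.root).symm
    _ = (s.tcut n).code n (s.tcut n).root := code_root_eq_of_iso h n
    _ = s.code n s.root := code_tcut le_rfl _ s.root

/-- The finitely many pairs of children are told apart by their codes at one common depth. -/
theorem exists_children_equiv_of_forall_code_eq {m n : ℕ} {v : t.level m} {w : s.level n}
    (h : ∀ k, t.code k v = s.code k w) :
    ∃ e : {x // t.parent m x = v} ≃ {y // s.parent n y = w},
      ∀ x k, t.code k x.1 = s.code k (e x).1 := by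
  have separated (x : t.level (m + 1)) (y : s.level (n + 1)) :
      ∀ᶠ K in Filter.atTop, t.code K x = s.code K y → ∀ k, t.code k x = s.code k y := by
    by_cases hxy : ∀ k, t.code k x = s.code k y
    · exact .of_forall fun _ _ => hxy
    · obtain ⟨k, hk⟩ := not_forall.1 hxy
      filter_upwards [Filter.eventually_ge_atTop k] with K hK hcode
      exact absurd (code_eq_of_le hK hcode) hk
  obtain ⟨K, hK⟩ := (Filter.eventually_all.2 fun x =>
    Filter.eventually_all.2 fun y => separated x y).exists
  obtain ⟨e, he⟩ := TreeCode.node_eq_node_iff.1 (h (K + 1))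
  exact ⟨e, fun x => hK _ _ (he x)⟩

theorem iso_of_forall_code_root_eq (h : ∀ k, t.code k t.root = s.code k s.root) : t.Iso s :=
  iso_of_bisimulation (fun _ v w => ∀ k, t.code k v = s.code k w) h
    fun _ _ _ => exists_children_equiv_of_forall_code_eq

end RTree

section PeriodicPoints

variable {α : Type*} {f : α → α}

theorem exists_iterate_mem_periodicPts [Finite α] (f : α → α) (s : α) :
    ∃ k, f^[k] s ∈ periodicPts f := by
  obtain ⟨i, j, hij, hlt⟩ : ∃ i j, f^[i] s = f^[j] s ∧ i < j := by
    obtain ⟨i, j, hij, hne⟩ := Finite.exists_ne_map_eq_of_infinite (f^[·] s)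
    rcases lt_or_gt_of_ne hij with hlt | hlt
    · exact ⟨i, j, hne, hlt⟩
    · exact ⟨j, i, hne.symm, hlt⟩
  refine ⟨i, mk_mem_periodicPts (Nat.sub_pos_of_lt hlt) ?_⟩
  rw [IsPeriodicPt, IsFixedPt, ← iterate_add_apply, Nat.sub_add_cancel hlt.le, hij]

theorem iterate_mem_periodicPts {c : α} (hc : c ∈ periodicPts f) (k : ℕ) :
    f^[k] c ∈ periodicPts f :=
  ((bijOn_periodicPts f).mapsTo.iterate k) hc

theorem periodicPts_subset_range_iterate (k : ℕ) : periodicPts f ⊆ range f^[k] :=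
  fun _ hc => ((bijOn_periodicPts f).surjOn.iterate k hc).imp fun _ h => h.2

theorem range_iterate_subset_range_iterate {j k : ℕ} (hjk : j ≤ k) :
    range f^[k] ⊆ range f^[j] := by
  obtain ⟨i, rfl⟩ := Nat.exists_eq_add_of_le hjk
  rw [iterate_add]
  exact range_comp_subset_range _ _

theorem periodicPts_prodMap {β : Type*} (f : α → α) (g : β → β) :
    periodicPts (Prod.map f g) = periodicPts f ×ˢ periodicPts g := by
  ext p
  simp only [mem_prod, ← minimalPeriod_pos_iff_mem_periodicPts, minimalPeriod_prodMap,
    Nat.lcm_pos_iff]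

theorem minimalPeriod_le_ncard_periodicPts [Finite α] {c : α} (hc : c ∈ periodicPts f) :
    minimalPeriod f c ≤ (periodicPts f).ncard := by
  have h := ncard_le_ncard_of_injOn (f^[·] c) (fun k _ => iterate_mem_periodicPts hc k)
    iterate_injOn_Iio_minimalPeriod (toFinite (periodicPts f))
  simpa [← Finset.coe_Iio, ncard_coe_finset] using h

/-- The infinite branch of the tree of iterated preimages of a periodic point `c`: its `k`-th
vertex is the periodic point whose `k`-th iterate is `c`, because `f^[p - 1]` inverts `f` on a cycle
of length `p`. For `c` not periodic it is constantly `c`. -/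
noncomputable def backwardOrbit (f : α → α) (c : α) (k : ℕ) : α := f^[k * (minimalPeriod f c - 1)] c

@[simp]
theorem backwardOrbit_zero (f : α → α) (c : α) : backwardOrbit f c 0 = c := by
  simp [backwardOrbit]

theorem backwardOrbit_mem_periodicPts {c : α} (hc : c ∈ periodicPts f) (k : ℕ) :
    backwardOrbit f c k ∈ periodicPts f :=
  iterate_mem_periodicPts hc _

theorem apply_backwardOrbit_succ {c : α} (hc : c ∈ periodicPts f) (k : ℕ) :
    f (backwardOrbit f c (k + 1)) = backwardOrbit f c k := by
  have hpos := minimalPeriod_pos_of_mem_periodicPts hc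
  have hexp : (k + 1) * (minimalPeriod f c - 1) + 1 =
      k * (minimalPeriod f c - 1) + minimalPeriod f c := by
    rw [add_one_mul, add_assoc, Nat.sub_add_cancel hpos]
  rw [backwardOrbit, ← iterate_succ_apply' f, Nat.succ_eq_add_one, hexp, iterate_add_apply,
    iterate_minimalPeriod, backwardOrbit]

theorem periodic_backwardOrbit (f : α → α) (c : α) :
    Function.Periodic (backwardOrbit f c) (minimalPeriod f c) := by
  intro k
  rw [backwardOrbit, add_mul, iterate_add_apply,
    ((isPeriodicPt_minimalPeriod f c).mul_const _).eq, backwardOrbit]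

end PeriodicPoints

/-- The code of the tree of iterated preimages of a point under `f`, cut at depth `k`. -/
noncomputable def preimageCode {α : Type*} (f : α → α) : ∀ k : ℕ, α → TreeCode k
  | 0, _ => ()
  | k + 1, s => TreeCode.node fun v : {v // f v = s} => preimageCode f k v

section PreimageCode

variable {α β : Type*} [Finite α] [Finite β] {f : α → α} {g : β → β} {d k n : ℕ}

theorem mem_range_iterate_of_preimageCode_eq {j : ℕ} (hjk : j ≤ k) {s : α} {s' : β}
    (h : preimageCode f k s = preimageCode g k s') (hs : s ∈ range f^[j]) :
    s' ∈ range g^[j] := by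
  induction j generalizing k s s' with
  | zero => exact ⟨s', rfl⟩
  | succ j ih =>
    obtain ⟨k, rfl⟩ := Nat.exists_eq_add_of_le' (Nat.one_le_of_lt hjk)
    obtain ⟨e, he⟩ := TreeCode.node_eq_node_iff.1 h
    obtain ⟨v, hv⟩ := hs
    rw [iterate_succ_apply'] at hv
    obtain ⟨w, hw⟩ := ih (Nat.le_of_succ_le_succ hjk) (he ⟨f^[j] v, hv⟩) ⟨v, rfl⟩
    exact ⟨w, by rw [iterate_succ_apply', hw, (e _).2]⟩

theorem preimageCode_eq_of_notMem_range_iterate {s : α} {s' : β} (hs : s ∉ range f^[k])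
    (h : preimageCode f k s = preimageCode g k s') (m : ℕ) :
    preimageCode f m s = preimageCode g m s' := by
  induction k generalizing s s' m with
  | zero => exact absurd ⟨s, rfl⟩ hs
  | succ k ih =>
    cases m with
    | zero => rfl
    | succ m =>
      obtain ⟨e, he⟩ := TreeCode.node_eq_node_iff.1 h
      refine TreeCode.node_eq_node_iff.2 ⟨e, fun v => ih ?_ (he v) m⟩
      rintro ⟨w, hw⟩
      exact hs ⟨w, by rw [iterate_succ_apply', hw, v.2]⟩

theorem exists_preimage_equiv_map_periodic (hg : range g^[d] ⊆ periodicPts g) (hdk : d ≤ k)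
    {c : α} {b : β} (hc : c ∈ periodicPts f) (hb : b ∈ periodicPts g)
    (h : preimageCode f (k + 1) (f c) = preimageCode g (k + 1) (g b)) :
    ∃ e : {v // f v = f c} ≃ {w // g w = g b},
      e ⟨c, rfl⟩ = ⟨b, rfl⟩ ∧
        ∀ v : {v // f v = f c}, preimageCode f k v = preimageCode g k (e v) := by
  obtain ⟨e, he⟩ := TreeCode.node_eq_node_iff.1 h
  have hmem : (e ⟨c, rfl⟩).1 ∈ periodicPts g :=
    hg (mem_range_iterate_of_preimageCode_eq hdk (he _) (periodicPts_subset_range_iterate d hc))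
  exact ⟨e, Subtype.ext ((bijOn_periodicPts g).injOn hmem hb (e _).2), he⟩

theorem preimageCode_eq_of_apply (hg : range g^[d] ⊆ periodicPts g) (hdk : d ≤ k) {c : α} {b : β}
    (hc : c ∈ periodicPts f) (hb : b ∈ periodicPts g)
    (h : preimageCode f (k + 1) (f c) = preimageCode g (k + 1) (g b)) :
    preimageCode f k c = preimageCode g k b := by
  obtain ⟨e, hcb, he⟩ := exists_preimage_equiv_map_periodic hg hdk hc hb h
  simpa only [hcb] using he ⟨c, rfl⟩

theorem preimageCode_succ_apply_eq (hf : range f^[d] ⊆ periodicPts f)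
    (hg : range g^[d] ⊆ periodicPts g) (hdk : d ≤ k) {c : α} {b : β} (hc : c ∈ periodicPts f)
    (hb : b ∈ periodicPts g) (h : preimageCode f (k + 1) (f c) = preimageCode g (k + 1) (g b))
    {m : ℕ} (hm : preimageCode f m c = preimageCode g m b) :
    preimageCode f (m + 1) (f c) = preimageCode g (m + 1) (g b) := by
  obtain ⟨e, hcb, he⟩ := exists_preimage_equiv_map_periodic hg hdk hc hb h
  refine TreeCode.node_eq_node_iff.2 ⟨e, fun v => ?_⟩
  by_cases hv : v.1 ∈ periodicPts f
  · obtain rfl : v = ⟨c, rfl⟩ := Subtype.ext ((bijOn_periodicPts f).injOn hv hc v.2)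
    rwa [hcb]
  · exact preimageCode_eq_of_notMem_range_iterate
      (fun hmem => hv (hf (range_iterate_subset_range_iterate hdk hmem))) (he v) m

theorem preimageCode_backwardOrbit_eq (hg : range g^[d] ⊆ periodicPts g) {c : α} {b : β}
    (hc : c ∈ periodicPts f) (hb : b ∈ periodicPts g) (hdk : d ≤ k) {i : ℕ}
    (h : preimageCode f (k + i) c = preimageCode g (k + i) b) :
    preimageCode f k (backwardOrbit f c i) = preimageCode g k (backwardOrbit g b i) := by
  induction i generalizing k with
  | zero => rwa [backwardOrbit_zero, backwardOrbit_zero]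
  | succ i ih =>
    refine preimageCode_eq_of_apply hg hdk (backwardOrbit_mem_periodicPts hc _)
      (backwardOrbit_mem_periodicPts hb _) ?_
    rw [apply_backwardOrbit_succ hc, apply_backwardOrbit_succ hb]
    exact ih (by lia) (by rwa [add_assoc, add_comm 1 i])

theorem preimageCode_eq_of_minimalPeriod_add_le (hf : range f^[d] ⊆ periodicPts f)
    (hg : range g^[d] ⊆ periodicPts g) {c : α} {b : β} (hc : c ∈ periodicPts f)
    (hb : b ∈ periodicPts g) (hn : minimalPeriod f c + minimalPeriod g b + d ≤ n)
    (h : preimageCode f n c = preimageCode g n b) (m : ℕ) :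
    preimageCode f m c = preimageCode g m b := by
  suffices along_branch : ∀ i,
      preimageCode f m (backwardOrbit f c i) = preimageCode g m (backwardOrbit g b i) by
    simpa only [backwardOrbit_zero] using along_branch 0
  induction m with
  | zero => exact fun _ => rfl
  | succ m ih =>
    refine eq_of_periodic_of_forall_lt_add
      ((periodic_backwardOrbit f c).comp (preimageCode f (m + 1)))
      ((periodic_backwardOrbit g b).comp (preimageCode g (m + 1)))
      (minimalPeriod_pos_of_mem_periodicPts hc) (minimalPeriod_pos_of_mem_periodicPts hb)
      fun i hi => ?_
    obtain ⟨k, rfl⟩ : ∃ k, n = k + 1 + i := ⟨n - (i + 1), by lia⟩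
    have hcut := preimageCode_backwardOrbit_eq hg hc hb (by lia) h
    rw [← apply_backwardOrbit_succ hc, ← apply_backwardOrbit_succ hb] at hcut ⊢
    exact preimageCode_succ_apply_eq hf hg (by lia) (backwardOrbit_mem_periodicPts hc _)
      (backwardOrbit_mem_periodicPts hb _) hcut (ih (i + 1))

theorem range_iterate_subset_periodicPts_of_preimageCode_eq (hg : range g^[d] ⊆ periodicPts g)
    (hdn : d < n)
    (h : ∀ c ∈ periodicPts f, ∃ b, preimageCode f n c = preimageCode g n b) :
    range f^[d] ⊆ periodicPts f := by
  obtain ⟨k, rfl⟩ := Nat.exists_eq_add_of_le' (Nat.one_le_of_lt hdn)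
  have mem_of_apply_mem (s : α) (hs : s ∈ range f^[d]) (hfs : f s ∈ periodicPts f) :
      s ∈ periodicPts f := by
    obtain ⟨b, hcode⟩ := h _ hfs
    obtain ⟨e, he⟩ := TreeCode.node_eq_node_iff.1 hcode
    obtain ⟨c, hc, hcs⟩ := (bijOn_periodicPts f).surjOn hfs
    have map_periodic (v : {v // f v = f s}) (hv : v.1 ∈ range f^[d]) :
        (e v).1 ∈ periodicPts g :=
      hg (mem_range_iterate_of_preimageCode_eq (Nat.le_of_lt_succ hdn) (he v) hv)
    have hsc : e ⟨s, rfl⟩ = e ⟨c, hcs⟩ := Subtype.ext <| (bijOn_periodicPts g).injOn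
      (map_periodic _ hs) (map_periodic _ (periodicPts_subset_range_iterate d hc))
      ((e _).2.trans (e _).2.symm)
    obtain rfl : s = c := congrArg Subtype.val (e.injective hsc)
    exact hc
  intro s hs
  obtain ⟨j, hj⟩ := exists_iterate_mem_periodicPts f s
  induction j generalizing s with
  | zero => exact hj
  | succ j ih =>
    refine mem_of_apply_mem s hs (ih ?_ hj)
    obtain ⟨v, rfl⟩ := hs
    exact ⟨f v, (iterate_succ_apply f d v).symm.trans (iterate_succ_apply' f d v)⟩

end PreimageCode

theorem rel_iso_map_of_forall_iso {ι : Type*} (I : Multiset ι) {t s : ι → RTree}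
    (h : ∀ i, (t i).Iso (s i)) : Multiset.Rel RTree.Iso (I.map t) (I.map s) :=
  Multiset.rel_map.2 (Multiset.rel_refl_of_refl_on fun i _ => h i)

section Forest

variable {F G H : Forest}

theorem ForestEq.symm (h : ForestEq F G) : ForestEq G F :=
  Multiset.rel_flip.1 (h.mono fun _ _ _ _ => RTree.Iso.symm)

theorem ForestEq.trans (h : ForestEq F G) (h' : ForestEq G H) : ForestEq F H :=
  Multiset.Rel.trans _ h h'

theorem ForestEq.congr_left (h : ForestEq F G) : ForestEq F H ↔ ForestEq G H :=
  ⟨h.symm.trans, h.trans⟩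

theorem coe_fcut (F : Forest) (n : ℕ) :
    (fcut F n : Multiset RTree) = (F : Multiset RTree).map (RTree.tcut · n) :=
  rfl

theorem ForestEq.fcut (h : ForestEq F G) (n : ℕ) : ForestEq (fcut F n) (fcut G n) :=
  Multiset.rel_map.2 (h.mono fun _ _ _ _ hts => hts.tcut n)

theorem coe_fprod_of_coe_eq_map {ι κ : Type*} {I : Multiset ι} {J : Multiset κ} {t : ι → RTree}
    {s : κ → RTree} (hF : (F : Multiset RTree) = I.map t) (hG : (G : Multiset RTree) = J.map s) :
    (fprod F G : Multiset RTree) = (I ×ˢ J).map fun p => (t p.1).tprod (s p.2) := by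
  have hbind : (fprod F G : Multiset RTree) =
      (F : Multiset RTree).bind fun a => (G : Multiset RTree).map fun b => a.tprod b := by
    simp only [fprod, Multiset.map_coe, Multiset.coe_bind, List.flatMap]
  rw [hbind, hF, hG, Multiset.bind_map]
  simp only [Multiset.map_map, SProd.sprod, Multiset.product, Multiset.map_bind, comp_def]

theorem forestEq_fprod_fcut (F G : Forest) (n : ℕ) :
    ForestEq (fprod (fcut F n) (fcut G n)) (fcut (fprod F G) n) := by
  rw [ForestEq, coe_fprod_of_coe_eq_map (coe_fcut F n) (coe_fcut G n), coe_fcut,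
    coe_fprod_of_coe_eq_map (Multiset.map_id _).symm (Multiset.map_id _).symm, Multiset.map_map]
  exact rel_iso_map_of_forall_iso _ fun p => RTree.tprod_tcut_iso p.1 p.2 n

end Forest

namespace FDDS

variable {A B C X : FDDS}

instance (A : FDDS) : Finite A.S := @Finite.of_fintype _ A.fin

theorem range_iterate_depth_subset_periodicPts (A : FDDS) :
    range A.f^[A.depth] ⊆ periodicPts A.f := by
  rintro _ ⟨s, rfl⟩
  have hle : A.depthOf s ≤ A.depth := by
    refine le_csSup ((finite_range A.depthOf).bddAbove.mono ?_) ⟨s, rfl⟩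
    rintro _ ⟨v, rfl⟩
    exact ⟨v, rfl⟩
  have hper : A.f^[A.depthOf s] s ∈ periodicPts A.f :=
    Nat.sInf_mem (exists_iterate_mem_periodicPts A.f s)
  rw [← Nat.sub_add_cancel hle, iterate_add_apply]
  exact iterate_mem_periodicPts hper _

theorem code_unrollTree (A : FDDS) (u : A.S) (k : ℕ) {n : ℕ} (v : (A.unrollTree u).level n) :
    (A.unrollTree u).code k v = preimageCode A.f k v.1 := by
  induction k generalizing n with
  | zero => rfl
  | succ k ih =>
    let e : {x // (A.unrollTree u).parent n x = v} ≃ {s // A.f s = v.1} :=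
      { toFun := fun x => ⟨x.1.1, congrArg Subtype.val x.2⟩
        invFun := fun s => ⟨⟨s.1, by rw [iterate_succ_apply, s.2]; exact v.2⟩, Subtype.ext s.2⟩
        left_inv := fun _ => rfl
        right_inv := fun _ => rfl }
    exact TreeCode.node_eq_node_iff.2 ⟨e, fun x => ih x.1⟩

/-- The finite set of periodic states, which indexes the unroll trees of `A`. -/
noncomputable def periodicStates (A : FDDS) : Finset A.S := (toFinite (periodicPts A.f)).toFinset

@[simp]
theorem mem_periodicStates {u : A.S} : u ∈ A.periodicStates ↔ u ∈ periodicPts A.f := by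
  simp [periodicStates]

theorem minimalPeriod_le_card_periodicStates {u : A.S} (hu : u ∈ periodicPts A.f) :
    minimalPeriod A.f u ≤ A.periodicStates.card := by
  rw [periodicStates, ← ncard_eq_toFinset_card]
  exact minimalPeriod_le_ncard_periodicPts hu

theorem coe_unroll (A : FDDS) :
    (A.unroll : Multiset RTree) = A.periodicStates.val.map A.unrollTree := by
  rw [unroll, ← Multiset.map_coe, Finset.coe_toList]
  congr 2
  ext u
  simp only [Finset.mem_filter, Finset.mem_univ, true_and, mem_periodicStates]
  rfl

theorem length_unroll (A : FDDS) : A.unroll.length = A.periodicStates.card := by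
  rw [← Multiset.coe_card, coe_unroll, Multiset.card_map, Finset.card_val]

theorem unrollTree_iso_of_forall_preimageCode_eq {c : C.S} {b : B.S}
    (h : ∀ k, preimageCode C.f k c = preimageCode B.f k b) :
    (C.unrollTree c).Iso (B.unrollTree b) :=
  RTree.iso_of_forall_code_root_eq fun k =>
    (code_unrollTree C c k (RTree.root _)).trans
      ((h k).trans (code_unrollTree B b k (RTree.root _)).symm)

theorem preimageCode_eq_of_unrollTree_tcut_iso {n : ℕ} {c : C.S} {b : B.S}
    (h : ((C.unrollTree c).tcut n).Iso ((B.unrollTree b).tcut n)) :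
    preimageCode C.f n c = preimageCode B.f n b :=
  (code_unrollTree C c n _).symm.trans
    ((RTree.code_root_eq_of_tcut_iso h).trans (code_unrollTree B b n _))

theorem forestEq_unroll_iff_forestEq_fcut {n : ℕ} (hn : 2 * B.unroll.length + B.depth ≤ n) :
    ForestEq C.unroll B.unroll ↔ ForestEq (fcut C.unroll n) (fcut B.unroll n) := by
  refine ⟨fun h => h.fcut n, fun h => ?_⟩
  rw [ForestEq, coe_fcut, coe_fcut, coe_unroll, coe_unroll, Multiset.rel_map, Multiset.rel_map] at h
  rw [ForestEq, coe_unroll, coe_unroll, Multiset.rel_map]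
  rw [length_unroll] at hn
  have hcode : Multiset.Rel (fun c b => preimageCode C.f n c = preimageCode B.f n b)
      C.periodicStates.val B.periodicStates.val :=
    h.mono fun _ _ _ _ => preimageCode_eq_of_unrollTree_tcut_iso
  have hcard : C.periodicStates.card = B.periodicStates.card := Multiset.card_eq_card_of_rel hcode
  refine hcode.mono fun c hc b hb hcb => unrollTree_iso_of_forall_preimageCode_eq fun k => ?_
  rw [Finset.mem_val, mem_periodicStates] at hc hb
  have hcpos := minimalPeriod_pos_of_mem_periodicPts hc
  have hcle := minimalPeriod_le_card_periodicStates hc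
  have hble := minimalPeriod_le_card_periodicStates hb
  have hB := B.range_iterate_depth_subset_periodicPts
  have hC : range C.f^[B.depth] ⊆ periodicPts C.f := by
    refine range_iterate_subset_periodicPts_of_preimageCode_eq hB (n := n) (by lia) fun a ha => ?_
    obtain ⟨a', -, haa'⟩ := Multiset.exists_mem_of_rel_of_mem hcode (mem_periodicStates.2 ha)
    exact ⟨a', haa'⟩
  exact preimageCode_eq_of_minimalPeriod_add_le hC hB hc hb (by lia) hcb k

/-- The direct product of two systems, which act independently on pairs of states. -/
def prod (A X : FDDS) : FDDS where
  S := A.S × X.S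
  fin := @instFintypeProd _ _ A.fin X.fin
  f := Prod.map A.f X.f

theorem prod_f_iterate (A X : FDDS) (k : ℕ) (p : A.S × X.S) :
    (A.prod X).f^[k] p = (A.f^[k] p.1, X.f^[k] p.2) :=
  congrFun (Prod.map_iterate A.f X.f k) p

theorem unrollTree_tprod_iso (a : A.S) (x : X.S) :
    ((A.unrollTree a).tprod (X.unrollTree x)).Iso ((A.prod X).unrollTree (a, x)) :=
  ⟨fun k =>
    { toFun := fun v => ⟨(v.1.1, v.2.1),
        (prod_f_iterate A X k _).trans (Prod.ext v.1.2 v.2.2)⟩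
      invFun := fun p =>
        have hp := Prod.ext_iff.1 ((prod_f_iterate A X k p.1).symm.trans p.2)
        (⟨p.1.1, hp.1⟩, ⟨p.1.2, hp.2⟩)
      left_inv := fun _ => rfl
      right_inv := fun _ => rfl }, fun _ _ => rfl⟩

theorem periodicStates_prod (A X : FDDS) :
    (A.prod X).periodicStates = A.periodicStates ×ˢ X.periodicStates := by
  refine Finset.ext fun p : A.S × X.S => ?_
  calc p ∈ (A.prod X).periodicStates ↔ p ∈ periodicPts (Prod.map A.f X.f) := mem_periodicStates
    _ ↔ p ∈ A.periodicStates ×ˢ X.periodicStates := by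
      rw [periodicPts_prodMap, mem_prod, Finset.mem_product, mem_periodicStates,
        mem_periodicStates]

theorem forestEq_fprod_unroll (A X : FDDS) :
    ForestEq (fprod A.unroll X.unroll) (A.prod X).unroll := by
  rw [ForestEq, coe_fprod_of_coe_eq_map (coe_unroll A) (coe_unroll X), coe_unroll,
    periodicStates_prod, Finset.product_val]
  exact rel_iso_map_of_forall_iso _ fun p => unrollTree_tprod_iso p.1 p.2

end FDDS

/-- Let `A, X, B` be FDDS, `α` the number of unroll trees of `𝒰(B)`,
and `n ≥ 2α + depth B`. Then `𝒰(A)·𝒰(X) = 𝒰(B)` iff `𝒰(A)|_n · 𝒰(X)|_n = 𝒰(B)|_n`. -/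
theorem stmt2 (A X B : FDDS) (n : ℕ)
    (hn : 2 * (FDDS.unroll B).length + B.depth ≤ n) :
    ForestEq (fprod (FDDS.unroll A) (FDDS.unroll X)) (FDDS.unroll B) ↔
      ForestEq (fprod (fcut (FDDS.unroll A) n) (fcut (FDDS.unroll X) n))
        (fcut (FDDS.unroll B) n) := by
  have hprod := FDDS.forestEq_fprod_unroll A X
  rw [hprod.congr_left, ((forestEq_fprod_fcut _ _ n).trans (hprod.fcut n)).congr_left]
  exact FDDS.forestEq_unroll_iff_forestEq_fcut hn
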